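/- Let X be a quasicompact, quasiseparated topological space whose quasicompact open subsets form a basis of its topology, and let K be any topological space. Then restriction defines a bijection from the set of frame homomorphisms Opens X → Opens K (maps of complete lattices preserving finite meets, including the top element, and arbitrary joins) onto the set of bounded lattice homomorphisms CompactOpens X → Opens K (maps preserving ⊥, ⊤, binary meets, and binary joins). -/

import Mathlib

open TopologicalSpace

instance {α : Type*} [TopologicalSpace α] [QuasiSeparatedSpace α] :
    Lattice (CompactOpens α) :=
  { (inferInstance : SemilatticeSup (CompactOpens α)),
    (inferInstance : SemilatticeInf (CompactOpens α)) with }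

/-! When the compact opens of `X` form a basis, `Opens X` is the ideal completion of the
join-semilattice `CompactOpens X`, with compact opens corresponding to principal ideals. The theorem
is thus the universal property of the ideal completion of a bounded lattice `A`: a bounded lattice
homomorphism `g` from `A` to a frame extends uniquely to a frame homomorphism on ideals, namely
`I ↦ ⨆ x ∈ I, g x`. This extension preserves joins because it is left adjoint to
`a ↦ {x | g x ≤ a}`, and binary meets by distributivity of the frame. -/

open Order

section Principal

variable {A : Type*}

theorem principal_sup [SemilatticeSup A] [IsCodirectedOrder A] (x y : A) :
    Ideal.principal (x ⊔ y) = Ideal.principal x ⊔ Ideal.principal y :=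
  eq_of_forall_ge_iff fun I => by simp only [Ideal.principal_le_iff, Ideal.sup_mem_iff, sup_le_iff]

theorem principal_inf [Lattice A] (x y : A) :
    Ideal.principal (x ⊓ y) = Ideal.principal x ⊓ Ideal.principal y :=
  SetLike.ext fun _ => le_inf_iff

theorem iSup_principal_eq [SemilatticeSup A] [OrderBot A] (I : Ideal A) :
    ⨆ x ∈ I, Ideal.principal x = I :=
  le_antisymm (iSup₂_le fun _ hx => Ideal.principal_le_iff.2 hx)
    fun x hx => Ideal.principal_le_iff.1 (le_iSup₂ (f := fun x _ => Ideal.principal x) x hx)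

/-- The embedding of a bounded lattice into its ideal completion, `Ideal.principal` as a bounded
lattice homomorphism. -/
def principalHom (A : Type*) [Lattice A] [BoundedOrder A] : BoundedLatticeHom A (Ideal A) where
  toFun := Ideal.principal
  map_sup' := principal_sup
  map_inf' := principal_inf
  map_top' := Ideal.principal_top
  map_bot' := Ideal.principal_bot

end Principal

section IdealExtension

variable {A L F : Type*}

/-- The extension of a map `g` on `A` to the ideals of `A`, sending an ideal to the join of the
values of `g` on it. -/
def idealExtension [LE A] [CompleteLattice L] (g : A → L) (I : Ideal A) : L :=
  ⨆ x ∈ I, g x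

theorem idealExtension_principal [Preorder A] [CompleteLattice L] {g : A → L} (hg : Monotone g)
    (x : A) : idealExtension g (Ideal.principal x) = g x :=
  le_antisymm (iSup₂_le fun _ hy => hg (Ideal.mem_principal.1 hy))
    (le_iSup₂_of_le x Ideal.mem_principal_self le_rfl)

theorem idealExtension_comp_principal [SemilatticeSup A] [OrderBot A] [CompleteLattice L]
    [FunLike F (Ideal A) L] [sSupHomClass F (Ideal A) L] (f : F) (I : Ideal A) :
    idealExtension (fun x => f (Ideal.principal x)) I = f I :=
  calc
    ⨆ x ∈ I, f (Ideal.principal x) = f (⨆ x ∈ I, Ideal.principal x) := (map_iSup₂ f _).symm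
    _ = f I := by rw [iSup_principal_eq]

/-- The ideal `{x | g x ≤ a}` of a homomorphism `g` preserving finite joins; as a function of `a`,
it is the upper adjoint of `idealExtension g`. -/
def sublevelIdeal [SemilatticeSup A] [OrderBot A] [SemilatticeSup L] [OrderBot L]
    [FunLike F A L] [SupBotHomClass F A L] (g : F) (a : L) : Ideal A where
  carrier := {x | g x ≤ a}
  lower' _ _ hyx hx := (OrderHomClass.mono g hyx).trans hx
  nonempty' := ⟨⊥, (map_bot g).trans_le bot_le⟩
  directed' x hx y hy := ⟨x ⊔ y, (map_sup g x y).trans_le (sup_le hx hy), le_sup_left, le_sup_right⟩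

theorem gc_idealExtension_sublevelIdeal [SemilatticeSup A] [OrderBot A] [CompleteLattice L]
    [FunLike F A L] [SupBotHomClass F A L] (g : F) :
    GaloisConnection (idealExtension g) (sublevelIdeal g) :=
  fun _ _ => iSup₂_le_iff

theorem idealExtension_inf [Lattice A] [Frame L] [FunLike F A L] [InfHomClass F A L]
    (g : F) (I J : Ideal A) :
    idealExtension g (I ⊓ J) = idealExtension g I ⊓ idealExtension g J := by
  apply le_antisymm
  · exact le_inf (biSup_mono fun _ hx => hx.1) (biSup_mono fun _ hx => hx.2)
  · simp only [idealExtension, iSup_inf_eq, inf_iSup_eq, iSup_le_iff, ← map_inf]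
    exact fun y hy x hx =>
      le_iSup₂_of_le (x ⊓ y) ⟨I.lower inf_le_left hx, J.lower inf_le_right hy⟩ le_rfl

variable [Lattice A] [BoundedOrder A] [Frame L]

/-- The frame homomorphism out of the ideal completion of `A` induced by a bounded lattice
homomorphism out of `A`. -/
def idealFrameHom (g : BoundedLatticeHom A L) : FrameHom (Ideal A) L where
  toFun := idealExtension g
  map_inf' := idealExtension_inf g
  map_top' := by
    rw [← Ideal.principal_top, idealExtension_principal (OrderHomClass.mono g), map_top]
  map_sSup' _ := by rw [(gc_idealExtension_sublevelIdeal g).l_sSup, sSup_image]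

/-- The universal property of the ideal completion of a bounded lattice: restriction to principal
ideals identifies frame homomorphisms out of `Ideal A` with bounded lattice homomorphisms out of
`A`. -/
def idealFrameHomEquiv : FrameHom (Ideal A) L ≃ BoundedLatticeHom A L where
  toFun f := (f : BoundedLatticeHom (Ideal A) L).comp (principalHom A)
  invFun := idealFrameHom
  left_inv f := FrameHom.ext (idealExtension_comp_principal f)
  right_inv g := BoundedLatticeHom.ext (idealExtension_principal (OrderHomClass.mono g))

end IdealExtension

/-- Precomposition with (the inverse of) an order isomorphism, as an equivalence between types of
frame homomorphisms. -/
def frameHomCongrLeft {α β γ : Type*} [CompleteLattice α] [CompleteLattice β] [CompleteLattice γ]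
    (e : α ≃o β) : FrameHom α γ ≃ FrameHom β γ where
  toFun f := f.comp e.symm
  invFun f := f.comp e
  left_inv f := FrameHom.ext fun a => congrArg f (e.symm_apply_apply a)
  right_inv f := FrameHom.ext fun b => congrArg f (e.apply_symm_apply b)

theorem opensEquiv_symm_principal {X : Type*} [TopologicalSpace X] [PrespectralSpace X]
    (U : CompactOpens X) :
    PrespectralSpace.opensEquiv.symm (Ideal.principal U) = U.toOpens :=
  PrespectralSpace.opensEquiv.symm_apply_eq.2 rfl

theorem stmt15_general {X L : Type*} [TopologicalSpace X] [Frame L]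
    [CompactSpace X] [QuasiSeparatedSpace X]
    (hbasis : IsTopologicalBasis {U : Set X | IsCompact U ∧ IsOpen U}) :
    ∃ e : FrameHom (Opens X) L ≃ BoundedLatticeHom (CompactOpens X) L,
      ∀ (f : FrameHom (Opens X) L) (U : CompactOpens X), e f U = f U.toOpens := by
  have : PrespectralSpace X := .of_isTopologicalBasis hbasis fun _ hU => hU.1
  exact ⟨(frameHomCongrLeft PrespectralSpace.opensEquiv).trans idealFrameHomEquiv,
    fun f U => congrArg f (opensEquiv_symm_principal U)⟩

/-- Let `X` be a quasicompact quasiseparated space whose quasicompact open subsets form a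
basis of the topology, and let `K` be any space.  Restriction to quasicompact opens is a
bijection from frame homomorphisms `Opens X → Opens K` onto bounded lattice homomorphisms
`CompactOpens X → Opens K`. -/
theorem stmt15 {X K : Type*} [TopologicalSpace X] [TopologicalSpace K]
    [CompactSpace X] [QuasiSeparatedSpace X]
    (hbasis : IsTopologicalBasis {U : Set X | IsCompact U ∧ IsOpen U}) :
    ∃ e : FrameHom (Opens X) (Opens K) ≃ BoundedLatticeHom (CompactOpens X) (Opens K),
      ∀ (f : FrameHom (Opens X) (Opens K)) (U : CompactOpens X),
        e f U = f U.toOpens :=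
  stmt15_general hbasis
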